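/- L^p error bound: let n ≥ 2, let 0 < r₁ < … < r_n, set h := max_{1≤j≤n−1}(r_{j+1} − r_j), let f ∈ Λ₀, set α := f(0) and ν_j := f(r_j) for 1 ≤ j ≤ n, and let σ be either the interpolant σ^A (with σ(r_j) = ν_j for all j and σ(0) = α) or σ^B (non-singular, with σ(r_j) = ν_j for all j). Then for every p ∈ [2,∞] and l ∈ {0,1}: ‖f^{(l)} − σ^{(l)}‖_{L^p[r₁,r_n]} ≤ (1/(2^{1−l}·√r₁))·h^{3/2 + 1/p − l}·‖f‖₀ (with the convention 1/∞ = 0). -/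

import Mathlib

open MeasureTheory Set Filter

noncomputable section

/-- The radial Beppo Levi energy space `Λ₀`: functions `f : (0,∞) → ℂ` of class `C¹`
whose derivative `f′` is locally absolutely continuous on compact subintervals of `(0,∞)`
(encoded by the fundamental theorem of calculus with an integrable density `f″`),
and whose radial Beppo Levi energy `∫₀^∞ ( r·|f″(r)|² + (1/r)·|f′(r)|² ) dr` is finite. -/
structure Lambda0 where
  f : ℝ → ℂ
  f' : ℝ → ℂ
  f'' : ℝ → ℂ
  hasDeriv : ∀ r ∈ Set.Ioi (0:ℝ), HasDerivAt f (f' r) r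
  contDeriv : ContinuousOn f' (Set.Ioi 0)
  locAC : ∀ a b : ℝ, 0 < a → a ≤ b →
    MeasureTheory.IntegrableOn f'' (Set.Icc a b) ∧
      ∀ x ∈ Set.Icc a b, f' x = f' a + ∫ t in a..x, f'' t
  energyFin : MeasureTheory.IntegrableOn
    (fun r : ℝ => r * ‖f'' r‖ ^ 2 + (1 / r) * ‖f' r‖ ^ 2) (Set.Ioi 0)

/-- The squared radial Beppo Levi energy `‖·‖₀²` of a function with first derivative `g'`
and second derivative `g''`. -/
def energySq (g' g'' : ℝ → ℂ) : ℝ :=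
  ∫ r in Set.Ioi (0:ℝ), (r * ‖g'' r‖ ^ 2 + (1 / r) * ‖g' r‖ ^ 2)

/-- The seminorm `‖f‖₀`. -/
def Lambda0.seminorm0 (F : Lambda0) : ℝ :=
  Real.sqrt (energySq F.f' F.f'')

/-- The semi-inner product `⟨f,g⟩₀`. -/
def innerBL (F G : Lambda0) : ℂ :=
  ∫ r in Set.Ioi (0:ℝ),
    ((r : ℂ) * F.f'' r * (starRingEnd ℂ) (G.f'' r) +
      (1 / (r : ℂ)) * F.f' r * (starRingEnd ℂ) (G.f' r))

/-- A Beppo Levi `L₀`-spline on the positive knots `r 1 < r 2 < … < r n`: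
piecewise of the form `a·x² + b·x²·ln x + c + d·ln x` between consecutive knots,
of the form `a·x² + b·x²·ln x + c` on `(0, r 1)`, of the form `c + d·ln x` on `(r n, ∞)`,
`C²` throughout `(0,∞)`, and continuously extended at `0`. -/
structure IsBLSpline (n : ℕ) (r : ℕ → ℝ) (η : ℝ → ℂ) : Prop where
  pieces : ∀ j : ℕ, 1 ≤ j → j + 1 ≤ n → ∃ a b c d : ℂ,
    ∀ x ∈ Set.Ioo (r j) (r (j + 1)),
      η x = a * (x : ℂ) ^ 2 + b * (x : ℂ) ^ 2 * (Real.log x : ℂ) + c + d * (Real.log x : ℂ)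
  left : ∃ a b c : ℂ, ∀ x ∈ Set.Ioo (0 : ℝ) (r 1),
      η x = a * (x : ℂ) ^ 2 + b * (x : ℂ) ^ 2 * (Real.log x : ℂ) + c
  right : ∃ c d : ℂ, ∀ x ∈ Set.Ioi (r n), η x = c + d * (Real.log x : ℂ)
  smooth : ContDiffOn ℝ 2 η (Set.Ioi 0)
  cont0 : ContinuousWithinAt η (Set.Ici 0) 0

/-- A Beppo Levi `L₀`-spline is non-singular if on `(0, r₁)` it has the form `a·x² + c`. -/
def NonSingularBLS (r1 : ℝ) (η : ℝ → ℂ) : Prop :=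
  ∃ a c : ℂ, ∀ x ∈ Set.Ioo (0 : ℝ) r1, η x = a * (x : ℂ) ^ 2 + c

/-- Rabut's kernel `K`. -/
def Kfun (r t : ℝ) : ℝ :=
  if r ≤ t then 0 else (1 / 4) * (t ^ 2 - r ^ 2 + (r ^ 2 + t ^ 2) * Real.log (r / t))

/-- The limiting kernel `H_{0,∞}` (with left endpoint knot `r1`). -/
def Hfun (r1 r t : ℝ) : ℝ :=
  Kfun r t - Kfun r r1 - Kfun r1 t + (1 / 4) * (r ^ 2 - r1 ^ 2) * Real.log (t / r1)

/-- The basis function `φ₀`. -/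
def phi0 (r : ℝ) : ℝ :=
  if r ≤ 1 then r ^ 2 - r ^ 2 * Real.log r else 1 + Real.log r

/-- Johnson's compactly supported profile `η₂`. -/
def eta2 (x : ℝ) : ℂ :=
  (((4 / 3 : ℝ) * (Real.log 2 - phi0 x + phi0 (x / 2)) : ℝ) : ℂ)

/-- The non-singular compactly supported profile `β`. -/
def betaFn (x : ℝ) : ℂ :=
  (((1 / 5 : ℝ) * (27 * Real.log 3 - 32 * Real.log 2 + 5 * phi0 x
      - 32 * phi0 (x / 2) + 27 * phi0 (x / 3)) : ℝ) : ℂ)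

/-- `Ker L₀ = span{r², r² ln r, 1, ln r}`, as functions on `(0,∞)`. -/
def KerL0 : Set (ℝ → ℂ) :=
  {η | ∃ a b c d : ℂ, ∀ x : ℝ, 0 < x →
    η x = a * (x : ℂ) ^ 2 + b * (x : ℂ) ^ 2 * (Real.log x : ℂ) + c + d * (Real.log x : ℂ)}

/-- `α(h) = inf_{η ∈ Ker L₀} sup_{t ∈ [0,1]} |t^μ − η(1+th)|`. -/
def alphaFn (μ h : ℝ) : ℝ :=
  sInf {v : ℝ | ∃ η ∈ KerL0,
    v = sSup ((fun t : ℝ => ‖((t ^ μ : ℝ) : ℂ) - η (1 + t * h)‖) '' Set.Icc (0 : ℝ) 1)}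

/- The error `F - S` is orthogonal to the spline `S` in the energy semi-inner product: on each
piece, integration by parts leaves only boundary terms `(F - S)′ · x S″`, which are continuous
across the knots, and multiples of the increments of `F - S`, which vanishes at the knots. Hence the
energy of `F - S` is at most that of `F`. Between consecutive knots at distance at most `h`,
`F - S` vanishes at both ends, so Cauchy–Schwarz bounds it and its derivative by the square root of
its energy on that piece. Summing the squares over the pieces gives the case `p = 2`, the supremum
gives `p = ∞`, and interpolation gives the rest. -/

/-- `u` is the primitive of an integrable density `v` on the interval with endpoints `a` and `b`.
For `u` this is absolute continuity, in the form in which `Lambda0.locAC` provides it. -/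
structure IsPrimitiveOn {E : Type*} [NormedAddCommGroup E] [NormedSpace ℝ E]
    (u v : ℝ → E) (a b : ℝ) : Prop where
  intervalIntegrable : IntervalIntegrable v volume a b
  eq_add_integral : ∀ x ∈ uIcc a b, u x = u a + ∫ t in a..x, v t

namespace IsPrimitiveOn

variable {E : Type*} [NormedAddCommGroup E] [NormedSpace ℝ E] {u v : ℝ → E} {a b : ℝ}

theorem sub_eq_integral (h : IsPrimitiveOn u v a b) {x y : ℝ} (hx : x ∈ uIcc a b)
    (hy : y ∈ uIcc a b) : u y - u x = ∫ t in x..y, v t := by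
  have hint {z : ℝ} (hz : z ∈ uIcc a b) : IntervalIntegrable v volume a z :=
    h.intervalIntegrable.mono_set (uIcc_subset_uIcc left_mem_uIcc hz)
  rw [h.eq_add_integral x hx, h.eq_add_integral y hy, add_sub_add_left_eq_sub,
    intervalIntegral.integral_interval_sub_left (hint hy) (hint hx)]

theorem norm_sub_le (h : IsPrimitiveOn u v a b) {x y : ℝ} (hx : x ∈ Icc a b) (hy : y ∈ Icc a b) :
    ‖u y - u x‖ ≤ ∫ t in a..b, ‖v t‖ := by
  have hab : a ≤ b := hx.1.trans hx.2
  rw [← uIcc_of_le hab] at hx hy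
  rw [h.sub_eq_integral hx hy]
  refine intervalIntegral.norm_integral_le_abs_integral_norm.trans ?_
  refine (intervalIntegral.abs_integral_mono_interval (uIoc_subset_uIoc_of_uIcc_subset_uIcc
    (uIcc_subset_uIcc hx hy)) (Eventually.of_forall fun t => norm_nonneg _)
    h.intervalIntegrable.norm).trans_eq ?_
  exact abs_of_nonneg (intervalIntegral.integral_nonneg hab fun t _ => norm_nonneg _)

theorem absolutelyContinuousOnInterval (h : IsPrimitiveOn u v a b) :
    AbsolutelyContinuousOnInterval u a b := by
  have hnorm := h.intervalIntegrable.norm.absolutelyContinuousOnInterval_intervalIntegral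
    (c := a) left_mem_uIcc
  have hvn : IsPrimitiveOn (fun x => ∫ t in a..x, ‖v t‖) (fun x => ‖v x‖) a b :=
    ⟨h.intervalIntegrable.norm, fun x _ => by simp⟩
  rw [absolutelyContinuousOnInterval_iff] at hnorm ⊢
  intro ε hε
  obtain ⟨δ, hδ, hnorm⟩ := hnorm ε hε
  refine ⟨δ, hδ, fun I hI hlen => (Finset.sum_le_sum fun i hi => ?_).trans_lt (hnorm I hI hlen)⟩
  obtain ⟨hx, hy⟩ := hI.1 i hi
  rw [dist_eq_norm, dist_eq_norm, h.sub_eq_integral hy hx, hvn.sub_eq_integral hy hx]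
  exact intervalIntegral.norm_integral_le_abs_integral_norm

theorem ae_hasDerivAt [CompleteSpace E] (h : IsPrimitiveOn u v a b) :
    ∀ᵐ x, x ∈ Ioo a b → HasDerivAt u (v x) x := by
  filter_upwards [h.intervalIntegrable.ae_hasDerivAt_integral] with x hx hxab
  have hmem {y : ℝ} (hy : y ∈ Icc a b) : y ∈ uIcc a b := Icc_subset_uIcc hy
  have hderiv := hx (hmem (Ioo_subset_Icc_self hxab)) a left_mem_uIcc
  refine (hderiv.const_add (u a)).congr_of_eventuallyEq ?_
  filter_upwards [Icc_mem_nhds hxab.1 hxab.2] with y hy using h.eq_add_integral y (hmem hy)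

theorem of_ae_hasDerivAt [CompleteSpace E] (hab : a ≤ b) (hu : AbsolutelyContinuousOnInterval u a b)
    (hv : IntervalIntegrable v volume a b) (hd : ∀ᵐ x, x ∈ Ioo a b → HasDerivAt u (v x) x) :
    IsPrimitiveOn u v a b := by
  have hw : IsPrimitiveOn (fun x => ∫ t in a..x, v t) v a b := ⟨hv, fun x _ => by simp⟩
  have hdiff : ∀ᵐ x, x ∈ uIcc a b → HasDerivAt (fun x => u x - ∫ t in a..x, v t) 0 x := by
    filter_upwards [hd, hw.ae_hasDerivAt, Measure.ae_ne volume a, Measure.ae_ne volume b]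
      with x hux hwx hxa hxb hx
    rw [uIcc_of_le hab] at hx
    have hx' : x ∈ Ioo a b := ⟨hx.1.lt_of_ne' hxa, hx.2.lt_of_ne hxb⟩
    exact ((hux hx').fun_sub (hwx hx')).congr_deriv (sub_self _)
  obtain ⟨C, hC⟩ :=
    (hu.fun_sub hw.absolutelyContinuousOnInterval).const_of_ae_hasDerivAt_zero hdiff
  refine ⟨hv, fun x hx => ?_⟩
  have hCa := hC a left_mem_uIcc
  rw [intervalIntegral.integral_same, sub_zero] at hCa
  rw [hCa, ← hC x hx, sub_add_cancel]

theorem of_hasDerivAt_Ioo [CompleteSpace E] (hab : a ≤ b) (hu : ContinuousOn u (Icc a b))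
    (hd : ∀ x ∈ Ioo a b, HasDerivAt u (v x) x) (hv : IntervalIntegrable v volume a b) :
    IsPrimitiveOn u v a b := by
  refine ⟨hv, fun x hx => ?_⟩
  have hvx := hv.mono_set (uIcc_subset_uIcc left_mem_uIcc hx)
  rw [uIcc_of_le hab] at hx
  rw [intervalIntegral.integral_eq_sub_of_hasDerivAt_of_le hx.1
    (hu.mono (Icc_subset_Icc_right hx.2)) (fun y hy => hd y ⟨hy.1, hy.2.trans_le hx.2⟩) hvx,
    add_sub_cancel]

theorem sub {f f' g g' : ℝ → E} (hf : IsPrimitiveOn f f' a b) (hg : IsPrimitiveOn g g' a b) :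
    IsPrimitiveOn (fun x => f x - g x) (fun x => f' x - g' x) a b := by
  refine ⟨hf.intervalIntegrable.sub hg.intervalIntegrable, fun x hx => ?_⟩
  have hsub := uIcc_subset_uIcc left_mem_uIcc hx
  rw [intervalIntegral.integral_sub (hf.intervalIntegrable.mono_set hsub)
    (hg.intervalIntegrable.mono_set hsub), hf.eq_add_integral x hx, hg.eq_add_integral x hx,
    add_sub_add_comm]

theorem mul {𝕜 : Type*} [RCLike 𝕜] {f f' g g' : ℝ → 𝕜} (hab : a ≤ b)
    (hf : IsPrimitiveOn f f' a b) (hg : IsPrimitiveOn g g' a b) :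
    IsPrimitiveOn (fun x => f x * g x) (fun x => f' x * g x + f x * g' x) a b := by
  have hfc := hf.absolutelyContinuousOnInterval
  have hgc := hg.absolutelyContinuousOnInterval
  refine of_ae_hasDerivAt hab (hfc.fun_smul hgc)
    ((hf.intervalIntegrable.mul_continuousOn hgc.continuousOn).add
      (hg.intervalIntegrable.continuousOn_mul hfc.continuousOn)) ?_
  filter_upwards [hf.ae_hasDerivAt, hg.ae_hasDerivAt] with x hfx hgx hx
  exact (hfx hx).mul (hgx hx)

theorem conj {𝕜 : Type*} [RCLike 𝕜] {f f' : ℝ → 𝕜} (hf : IsPrimitiveOn f f' a b) :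
    IsPrimitiveOn (fun x => starRingEnd 𝕜 (f x)) (fun x => starRingEnd 𝕜 (f' x)) a b := by
  refine ⟨?_, fun x hx => ?_⟩
  · have hconj := (RCLike.conjCLE (K := 𝕜)).toContinuousLinearMap.integrable_comp
      (μ := volume.restrict (uIoc a b)) hf.intervalIntegrable.def'
    exact intervalIntegrable_iff.2 hconj
  · rw [intervalIntegral.intervalIntegral_conj, ← map_add, ← hf.eq_add_integral x hx]

end IsPrimitiveOn

theorem sq_intervalIntegral_le {u : ℝ → ℝ} {a b : ℝ} (hab : a ≤ b)
    (hu : IntervalIntegrable u volume a b)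
    (hu2 : IntervalIntegrable (fun x => u x ^ 2) volume a b) :
    (∫ x in a..b, u x) ^ 2 ≤ (b - a) * ∫ x in a..b, u x ^ 2 := by
  obtain rfl | hlt := hab.eq_or_lt
  · simp
  have hpos : 0 < b - a := sub_pos.2 hlt
  rw [intervalIntegrable_iff_integrableOn_Ioc_of_le hab] at hu hu2
  have hjensen := even_two.convexOn_pow.map_set_average_le (continuous_pow 2).continuousOn
    isClosed_univ (by simp [hlt]) measure_Ioc_lt_top.ne
    (ae_of_all _ fun x => mem_univ (u x)) hu hu2
  have haverage (w : ℝ → ℝ) : ⨍ x in Ioc a b, w x = (b - a)⁻¹ * ∫ x in a..b, w x := by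
    rw [← uIoc_of_le hab, interval_average_eq, smul_eq_mul]
  simp only [haverage] at hjensen
  calc (∫ x in a..b, u x) ^ 2
      = (b - a) ^ 2 * ((b - a)⁻¹ * ∫ x in a..b, u x) ^ 2 := by field_simp
    _ ≤ (b - a) ^ 2 * ((b - a)⁻¹ * ∫ x in a..b, u x ^ 2) := by gcongr
    _ = (b - a) * ∫ x in a..b, u x ^ 2 := by field_simp

section EndpointBounds

variable {E : Type*} [NormedAddCommGroup E] [NormedSpace ℝ E] {g g' : ℝ → E} {a b B : ℝ}

theorem norm_deriv_le_of_endpoints_eq (hab : a < b) (hg : ∀ x ∈ Icc a b, HasDerivAt g (g' x) x)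
    (hend : g a = g b) (hB : ∀ x ∈ Icc a b, ∀ y ∈ Icc a b, ‖g' y - g' x‖ ≤ B)
    {x : ℝ} (hx : x ∈ Icc a b) : ‖g' x‖ ≤ B := by
  have hlin (t : ℝ) (ht : t ∈ Icc a b) :
      HasDerivWithinAt (fun t => g t - t • g' x) (g' t - g' x) (Icc a b) t := by
    simpa using ((hg t ht).fun_sub ((hasDerivAt_id t).smul_const (g' x))).hasDerivWithinAt
  have hmvt := (convex_Icc a b).norm_image_sub_le_of_norm_hasDerivWithin_le hlin
    (fun t ht => hB x hx t ht) (left_mem_Icc.2 hab.le) (right_mem_Icc.2 hab.le)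
  have hdiff : g b - b • g' x - (g a - a • g' x) = -((b - a) • g' x) := by
    rw [hend]; module
  have hpos : 0 < b - a := sub_pos.2 hab
  rw [hdiff, norm_neg, norm_smul, mul_comm, Real.norm_of_nonneg hpos.le] at hmvt
  exact le_of_mul_le_mul_right hmvt hpos

theorem norm_le_of_endpoints_eq_zero (hg : ∀ x ∈ Icc a b, HasDerivAt g (g' x) x)
    (ha : g a = 0) (hb : g b = 0) (hB : ∀ x ∈ Icc a b, ‖g' x‖ ≤ B) {x : ℝ} (hx : x ∈ Icc a b) :
    ‖g x‖ ≤ (b - a) / 2 * B := by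
  have hab : a ≤ b := hx.1.trans hx.2
  have hmvt {y : ℝ} (hy : y ∈ Icc a b) : ‖g x - g y‖ ≤ B * ‖x - y‖ :=
    (convex_Icc a b).norm_image_sub_le_of_norm_hasDerivWithin_le
      (fun t ht => (hg t ht).hasDerivWithinAt) hB hy hx
  have hleft := hmvt (left_mem_Icc.2 hab)
  have hright := hmvt (right_mem_Icc.2 hab)
  rw [ha, sub_zero, Real.norm_of_nonneg (sub_nonneg.2 hx.1)] at hleft
  rw [hb, sub_zero, Real.norm_of_nonpos (sub_nonpos.2 hx.2)] at hright
  linarith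

end EndpointBounds

section LpBounds

variable {α E : Type*} [NormedAddCommGroup E]

/- Interpolation between `L^q` and `L^∞`: the integrand `‖f‖ ^ p` splits as
`‖f‖ ^ (p - q) * ‖f‖ ^ q`. -/
theorem eLpNorm_le_of_lintegral_rpow_le_of_ae_le [MeasurableSpace α] {μ : Measure α} {f : α → E}
    {p : ENNReal} {q : ℝ} {C M : ENNReal} (hq : 0 < q) (hqp : ENNReal.ofReal q ≤ p) (hM : M ≠ ⊤)
    (hsup : ∀ᵐ x ∂μ, ‖f x‖ₑ ≤ M) (hint : ∫⁻ x, ‖f x‖ₑ ^ q ∂μ ≤ C * M ^ q) :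
    eLpNorm f p μ ≤ C ^ (1 / p).toReal * M := by
  obtain rfl | hp := eq_or_ne p ⊤
  · simpa [eLpNorm_exponent_top, eLpNormEssSup] using essSup_le_of_ae_le M hsup
  have hp0 : p ≠ 0 := ((ENNReal.ofReal_pos.2 hq).trans_le hqp).ne'
  have hqp' : q ≤ p.toReal := (ENNReal.ofReal_le_iff_le_toReal hp).1 hqp
  have hppos : 0 < p.toReal := hq.trans_le hqp'
  have hsplit (t : ENNReal) : t ^ p.toReal = t ^ (p.toReal - q) * t ^ q := by
    rw [← ENNReal.rpow_add_of_nonneg _ _ (sub_nonneg.2 hqp') hq.le, sub_add_cancel]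
  have hbound : ∫⁻ x, ‖f x‖ₑ ^ p.toReal ∂μ ≤ C * M ^ p.toReal :=
    calc ∫⁻ x, ‖f x‖ₑ ^ p.toReal ∂μ
        ≤ ∫⁻ x, M ^ (p.toReal - q) * ‖f x‖ₑ ^ q ∂μ := by
          refine lintegral_mono_ae (hsup.mono fun x hx => ?_)
          rw [hsplit]
          gcongr
      _ = M ^ (p.toReal - q) * ∫⁻ x, ‖f x‖ₑ ^ q ∂μ :=
          lintegral_const_mul' _ _ (ENNReal.rpow_ne_top_of_nonneg (sub_nonneg.2 hqp') hM)
      _ ≤ M ^ (p.toReal - q) * (C * M ^ q) := by gcongr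
      _ = C * M ^ p.toReal := by rw [hsplit M]; ring
  rw [eLpNorm_eq_lintegral_rpow_enorm_toReal hp0 hp]
  calc (∫⁻ x, ‖f x‖ₑ ^ p.toReal ∂μ) ^ (1 / p.toReal)
      ≤ (C * M ^ p.toReal) ^ (1 / p.toReal) := by gcongr
    _ = C ^ (1 / p).toReal * M := by
      rw [ENNReal.mul_rpow_of_nonneg _ _ (by positivity), ← ENNReal.rpow_mul,
        mul_one_div_cancel hppos.ne', ENNReal.rpow_one, ENNReal.toReal_div, ENNReal.toReal_one]

theorem lintegral_biUnion_finset_le [MeasurableSpace α] {μ : Measure α} {ι : Type*} (I : Finset ι)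
    (s : ι → Set α) (f : α → ENNReal) :
    ∫⁻ x in ⋃ i ∈ I, s i, f x ∂μ ≤ ∑ i ∈ I, ∫⁻ x in s i, f x ∂μ := by
  rw [← Finset.tsum_subtype, ← Finset.set_biUnion_coe, biUnion_eq_iUnion]
  exact lintegral_iUnion_le _ _

theorem eLpNorm_le_of_sq_le_on_pieces {s : ℕ → ℝ} {N : ℕ} {u : ℝ → E}
    {A : ℕ → ENNReal} {h M : ENNReal} (hM : M ≠ ⊤)
    (hgap : ∀ i ∈ Finset.range N, ENNReal.ofReal (s (i + 1) - s i) ≤ h)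
    (hu : ∀ i ∈ Finset.range N, ∀ x ∈ Ioc (s i) (s (i + 1)), ‖u x‖ₑ ^ 2 ≤ A i)
    (hA : ∑ i ∈ Finset.range N, A i ≤ M ^ 2) {p : ENNReal} (hp : 2 ≤ p) :
    eLpNorm u p (volume.restrict (Icc (s 0) (s N))) ≤ h ^ (1 / p).toReal * M := by
  have hcover := Ioc_subset_biUnion_Ioc N s
  rw [← restrict_Ioc_eq_restrict_Icc]
  refine eLpNorm_le_of_lintegral_rpow_le_of_ae_le (q := 2) two_pos (by simpa using hp) hM ?_ ?_
  · filter_upwards [ae_restrict_mem measurableSet_Ioc] with x hx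
    obtain ⟨i, hi, hxi⟩ := mem_iUnion₂.1 (hcover hx)
    refine (ENNReal.pow_le_pow_left_iff two_ne_zero).1 ?_
    exact (hu i hi x hxi).trans ((Finset.single_le_sum_of_canonicallyOrdered hi).trans hA)
  · simp only [ENNReal.rpow_ofNat]
    calc ∫⁻ x in Ioc (s 0) (s N), ‖u x‖ₑ ^ 2
        ≤ ∑ i ∈ Finset.range N, ∫⁻ x in Ioc (s i) (s (i + 1)), ‖u x‖ₑ ^ 2 :=
          (lintegral_mono_set hcover).trans (lintegral_biUnion_finset_le _ _ _)
      _ ≤ ∑ i ∈ Finset.range N, h * A i := by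
          refine Finset.sum_le_sum fun i hi => ?_
          refine (setLIntegral_mono' measurableSet_Ioc (hu i hi)).trans ?_
          rw [setLIntegral_const, Real.volume_Ioc, mul_comm]
          exact mul_le_mul_left (hgap i hi) _
      _ ≤ h * M ^ 2 := by rw [← Finset.mul_sum]; gcongr

end LpBounds

section Kernel

/-- The general element `a x² + b x² log x + c + d log x` of the kernel of `L₀`. -/
def kernelFun (a b c d : ℂ) (x : ℝ) : ℂ :=
  a * (x : ℂ) ^ 2 + b * (x : ℂ) ^ 2 * (Real.log x : ℂ) + c + d * (Real.log x : ℂ)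

/-- The derivative of `kernelFun a b c d` on `(0, ∞)`. -/
def kernelDeriv (a b d : ℂ) (x : ℝ) : ℂ :=
  2 * a * (x : ℂ) + b * (2 * (x : ℂ) * (Real.log x : ℂ) + (x : ℂ)) + d / (x : ℂ)

/-- The second derivative of `kernelFun a b c d` on `(0, ∞)`. -/
def kernelDeriv₂ (a b d : ℂ) (x : ℝ) : ℂ :=
  2 * a + b * (2 * (Real.log x : ℂ) + 3) - d / (x : ℂ) ^ 2

variable (a b c d : ℂ) {x : ℝ}

theorem hasDerivAt_log_ofReal (hx : 0 < x) :
    HasDerivAt (fun x : ℝ => (Real.log x : ℂ)) ((x : ℂ)⁻¹) x := by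
  simpa using (Real.hasDerivAt_log hx.ne').ofReal_comp

theorem hasDerivAt_kernelFun (hx : 0 < x) :
    HasDerivAt (kernelFun a b c d) (kernelDeriv a b d x) x := by
  have hx' : (x : ℂ) ≠ 0 := Complex.ofReal_ne_zero.2 hx.ne'
  have hid : HasDerivAt (fun x : ℝ => (x : ℂ)) 1 x := (hasDerivAt_id x).ofReal_comp
  have hlog := hasDerivAt_log_ofReal hx
  have hsq := hid.fun_pow 2
  refine ((((hsq.const_mul a).fun_add ((hsq.const_mul b).fun_mul hlog)).add_const c).fun_add
    (hlog.const_mul d)).congr_deriv ?_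
  unfold kernelDeriv
  push_cast
  field_simp

theorem hasDerivAt_kernelDeriv (hx : 0 < x) :
    HasDerivAt (kernelDeriv a b d) (kernelDeriv₂ a b d x) x := by
  have hx' : (x : ℂ) ≠ 0 := Complex.ofReal_ne_zero.2 hx.ne'
  have hid : HasDerivAt (fun x : ℝ => (x : ℂ)) 1 x := (hasDerivAt_id x).ofReal_comp
  refine (((hid.const_mul (2 * a)).fun_add ((((hid.const_mul 2).fun_mul
    (hasDerivAt_log_ofReal hx)).fun_add hid).const_mul b)).fun_add
    ((hasDerivAt_const x d).fun_div hid hx')).congr_deriv ?_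
  unfold kernelDeriv₂
  field_simp
  ring

theorem hasDerivAt_mul_kernelDeriv₂ (hx : 0 < x) :
    HasDerivAt (fun x : ℝ => (x : ℂ) * kernelDeriv₂ a b d x)
      (kernelDeriv a b d x / x + 4 * b) x := by
  have hx' : (x : ℂ) ≠ 0 := Complex.ofReal_ne_zero.2 hx.ne'
  have hid : HasDerivAt (fun x : ℝ => (x : ℂ)) 1 x := (hasDerivAt_id x).ofReal_comp
  refine (hid.fun_mul ((((((hasDerivAt_log_ofReal hx).const_mul 2).add_const 3).const_mul
    b).const_add (2 * a)).fun_sub ((hasDerivAt_const x d).fun_div (hid.fun_pow 2)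
    (pow_ne_zero 2 hx')))).congr_deriv ?_
  unfold kernelDeriv
  push_cast
  field_simp
  ring

end Kernel

namespace Lambda0

/-- The integrand `r |f″(r)|² + |f′(r)|² / r` of the Beppo Levi energy. -/
def energyDensity (G : Lambda0) (x : ℝ) : ℝ :=
  x * ‖G.f'' x‖ ^ 2 + 1 / x * ‖G.f' x‖ ^ 2

/-- The integrand of the semi-inner product `innerBL`. -/
def innerDensity (F G : Lambda0) (x : ℝ) : ℂ :=
  (x : ℂ) * F.f'' x * starRingEnd ℂ (G.f'' x) + 1 / (x : ℂ) * F.f' x * starRingEnd ℂ (G.f' x)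

variable (F G S : Lambda0) {x : ℝ}

section EnergyBounds

variable {a b c : ℝ}

theorem energyDensity_nonneg (hx : 0 < x) : 0 ≤ G.energyDensity x := by
  unfold energyDensity; positivity

theorem integrableOn_energyDensity : IntegrableOn G.energyDensity (Ioi 0) := G.energyFin

theorem seminorm0_nonneg : 0 ≤ G.seminorm0 := Real.sqrt_nonneg _

theorem seminorm0_sq : G.seminorm0 ^ 2 = ∫ x in Ioi (0 : ℝ), G.energyDensity x :=
  Real.sq_sqrt (setIntegral_nonneg measurableSet_Ioi fun _ hx => G.energyDensity_nonneg hx)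

theorem intervalIntegrable_energyDensity (ha : 0 ≤ a) (hab : a ≤ b) :
    IntervalIntegrable G.energyDensity volume a b :=
  (intervalIntegrable_iff_integrableOn_Ioc_of_le hab).2
    (G.integrableOn_energyDensity.mono_set fun _ hx => ha.trans_lt hx.1)

theorem integral_energyDensity_nonneg (ha : 0 < a) (hab : a ≤ b) :
    0 ≤ ∫ x in a..b, G.energyDensity x :=
  intervalIntegral.integral_nonneg hab fun _ hx => G.energyDensity_nonneg (ha.trans_le hx.1)

theorem integral_energyDensity_le_seminorm0_sq (ha : 0 ≤ a) (hab : a ≤ b) :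
    ∫ x in a..b, G.energyDensity x ≤ G.seminorm0 ^ 2 := by
  rw [intervalIntegral.integral_of_le hab, seminorm0_sq]
  refine setIntegral_mono_set G.integrableOn_energyDensity ?_
    (Eventually.of_forall fun x hx => ha.trans_lt hx.1)
  filter_upwards [ae_restrict_mem measurableSet_Ioi] with x hx using G.energyDensity_nonneg hx

theorem isPrimitiveOn_f' (ha : 0 < a) (hab : a ≤ b) : IsPrimitiveOn G.f' G.f'' a b :=
  ⟨(intervalIntegrable_iff_integrableOn_Icc_of_le hab).2 (G.locAC a b ha hab).1,
    fun x hx => (G.locAC a b ha hab).2 x (uIcc_of_le hab ▸ hx)⟩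

theorem isPrimitiveOn_f (ha : 0 < a) (hab : a ≤ b) : IsPrimitiveOn G.f G.f' a b := by
  have hpos : Icc a b ⊆ Ioi 0 := fun x hx => ha.trans_le hx.1
  exact .of_hasDerivAt_Ioo hab
    (fun x hx => (G.hasDeriv x (hpos hx)).continuousAt.continuousWithinAt)
    (fun x hx => G.hasDeriv x (hpos (Ioo_subset_Icc_self hx)))
    (G.contDeriv.mono (uIcc_of_le hab ▸ hpos)).intervalIntegrable

theorem abs_norm_sq_f'_sub_le (ha : 0 < a) (hab : a ≤ b) :
    |‖G.f' b‖ ^ 2 - ‖G.f' a‖ ^ 2| ≤ G.seminorm0 ^ 2 := by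
  have hG := G.isPrimitiveOn_f' ha hab
  have hsq := hG.mul hab hG.conj
  have hcast (x : ℝ) : G.f' x * starRingEnd ℂ (G.f' x) = ((‖G.f' x‖ ^ 2 : ℝ) : ℂ) := by
    rw [Complex.mul_conj']; norm_cast
  have hdensity (x : ℝ) (hx : 0 < x) :
      ‖G.f'' x * starRingEnd ℂ (G.f' x) + G.f' x * starRingEnd ℂ (G.f'' x)‖ ≤
        G.energyDensity x := by
    refine (norm_add_le _ _).trans ?_
    simp only [norm_mul, RCLike.norm_conj]
    have hamgm : 0 ≤ (x * ‖G.f'' x‖ - ‖G.f' x‖) ^ 2 / x := by positivity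
    have hexpand : (x * ‖G.f'' x‖ - ‖G.f' x‖) ^ 2 / x =
        G.energyDensity x - 2 * (‖G.f'' x‖ * ‖G.f' x‖) := by
      unfold energyDensity; field_simp; ring
    linarith
  rw [← Real.norm_eq_abs, ← Complex.norm_real, Complex.ofReal_sub, ← hcast, ← hcast,
    hsq.sub_eq_integral left_mem_uIcc right_mem_uIcc]
  refine (intervalIntegral.norm_integral_le_of_norm_le hab (ae_of_all _ fun x hx =>
    hdensity x (ha.trans hx.1)) (G.intervalIntegrable_energyDensity ha.le hab)).trans ?_
  exact G.integral_energyDensity_le_seminorm0_sq ha.le hab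

theorem exists_norm_f'_le : ∃ C, ∀ x, 0 < x → ‖G.f' x‖ ≤ C := by
  refine ⟨√(‖G.f' 1‖ ^ 2 + G.seminorm0 ^ 2), fun x hx => Real.le_sqrt_of_sq_le ?_⟩
  have hosc : |‖G.f' x‖ ^ 2 - ‖G.f' 1‖ ^ 2| ≤ G.seminorm0 ^ 2 := by
    obtain h | h := le_total x 1
    · rw [abs_sub_comm]; exact G.abs_norm_sq_f'_sub_le hx h
    · exact G.abs_norm_sq_f'_sub_le one_pos h
  linarith [le_of_abs_le hosc]

theorem sq_integral_norm_f''_le (hc : 0 < c) (hca : c ≤ a) (hab : a ≤ b) :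
    (∫ x in a..b, ‖G.f'' x‖) ^ 2 ≤ (b - a) / c * ∫ x in a..b, G.energyDensity x := by
  have ha : 0 < a := hc.trans_le hca
  have hf'' := (G.isPrimitiveOn_f' ha hab).intervalIntegrable
  have hpoint (x : ℝ) (hx : a ≤ x) : ‖G.f'' x‖ ^ 2 ≤ 1 / c * G.energyDensity x := by
    have hx0 : 0 < x := ha.trans_le hx
    rw [one_div_mul_eq_div, le_div_iff₀' hc]
    calc c * ‖G.f'' x‖ ^ 2 ≤ x * ‖G.f'' x‖ ^ 2 := by gcongr; exact hca.trans hx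
      _ ≤ G.energyDensity x := le_add_of_nonneg_right (by positivity)
  have hdom := (G.intervalIntegrable_energyDensity ha.le hab).const_mul (1 / c)
  have hsq : IntervalIntegrable (fun x => ‖G.f'' x‖ ^ 2) volume a b := by
    refine hdom.mono_fun' (hf''.def'.aestronglyMeasurable.norm.pow 2) ?_
    filter_upwards [ae_restrict_mem measurableSet_uIoc] with x hx
    rw [uIoc_of_le hab] at hx
    simpa using hpoint x hx.1.le
  calc (∫ x in a..b, ‖G.f'' x‖) ^ 2
      ≤ (b - a) * ∫ x in a..b, ‖G.f'' x‖ ^ 2 := sq_intervalIntegral_le hab hf''.norm hsq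
    _ ≤ (b - a) * ∫ x in a..b, 1 / c * G.energyDensity x := by
        gcongr
        exact intervalIntegral.integral_mono_on hab hsq hdom fun x hx => hpoint x hx.1
    _ = (b - a) / c * ∫ x in a..b, G.energyDensity x := by
        rw [intervalIntegral.integral_const_mul]; ring

variable {G}

theorem norm_f'_sq_le (hc : 0 < c) (hca : c ≤ a) (hab : a < b) (ha : G.f a = 0) (hb : G.f b = 0)
    (hx : x ∈ Icc a b) : ‖G.f' x‖ ^ 2 ≤ (b - a) / c * ∫ t in a..b, G.energyDensity t := by
  have ha0 : 0 < a := hc.trans_le hca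
  have hosc : ‖G.f' x‖ ≤ ∫ t in a..b, ‖G.f'' t‖ :=
    norm_deriv_le_of_endpoints_eq hab (fun y hy => G.hasDeriv y (ha0.trans_le hy.1))
      (ha.trans hb.symm)
      (fun y hy z hz => (G.isPrimitiveOn_f' ha0 hab.le).norm_sub_le hy hz) hx
  exact (pow_le_pow_left₀ (norm_nonneg _) hosc 2).trans (G.sq_integral_norm_f''_le hc hca hab.le)

theorem norm_f_sq_le (hc : 0 < c) (hca : c ≤ a) (hab : a < b) (ha : G.f a = 0) (hb : G.f b = 0)
    (hx : x ∈ Icc a b) :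
    ‖G.f x‖ ^ 2 ≤ ((b - a) / 2) ^ 2 * ((b - a) / c * ∫ t in a..b, G.energyDensity t) := by
  have hf' (y : ℝ) (hy : y ∈ Icc a b) := Real.le_sqrt_of_sq_le (norm_f'_sq_le hc hca hab ha hb hy)
  have hf := norm_le_of_endpoints_eq_zero
    (fun y hy => G.hasDeriv y (hc.trans_le (hca.trans hy.1))) ha hb hf' hx
  have hnonneg := mul_nonneg (div_nonneg (sub_nonneg.2 hab.le) hc.le)
    (G.integral_energyDensity_nonneg (hc.trans_le hca) hab.le)
  calc ‖G.f x‖ ^ 2 ≤ _ := pow_le_pow_left₀ (norm_nonneg _) hf 2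
    _ = _ := by rw [mul_pow, Real.sq_sqrt hnonneg]

end EnergyBounds

section KnotErrorBounds

variable {G} {s : ℕ → ℝ} {N : ℕ} {h : ℝ} {p : ENNReal}

theorem eLpNorm_le_of_sq_le_energy {E : Type*} [NormedAddCommGroup E] {u : ℝ → E} {K : ℝ}
    (hs0 : 0 < s 0) (hs : MonotoneOn s (Iic N)) (hh : 0 ≤ h)
    (hgap : ∀ i < N, s (i + 1) - s i ≤ h) (hK : 0 ≤ K)
    (hu : ∀ i < N, ∀ x ∈ Icc (s i) (s (i + 1)),
      ‖u x‖ ^ 2 ≤ K * ∫ t in s i..s (i + 1), G.energyDensity t) (hp : 2 ≤ p) :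
    eLpNorm u p (volume.restrict (Icc (s 0) (s N))) ≤
      ENNReal.ofReal (√K * h ^ (1 / p).toReal * G.seminorm0) := by
  have hmono {i j : ℕ} (hij : i ≤ j) (hj : j ≤ N) : s i ≤ s j :=
    hs (hij.trans hj) hj hij
  have hpos {i : ℕ} (hi : i ≤ N) : 0 < s i := hs0.trans_le (hmono i.zero_le hi)
  have hnonneg {i : ℕ} (hi : i < N) : 0 ≤ ∫ t in s i..s (i + 1), G.energyDensity t :=
    G.integral_energyDensity_nonneg (hpos hi.le) (hmono i.le_succ hi)
  have hsum : ∑ i ∈ Finset.range N, K * ∫ t in s i..s (i + 1), G.energyDensity t ≤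
      (√K * G.seminorm0) ^ 2 := by
    rw [← Finset.mul_sum, intervalIntegral.sum_integral_adjacent_intervals fun i hi =>
      G.intervalIntegrable_energyDensity (hpos hi.le).le (hmono i.le_succ hi), mul_pow,
      Real.sq_sqrt hK]
    exact mul_le_mul_of_nonneg_left
      (G.integral_energyDensity_le_seminorm0_sq hs0.le (hmono N.zero_le le_rfl)) hK
  have hLp := eLpNorm_le_of_sq_le_on_pieces (u := u) (N := N) (s := s)
    (A := fun i => ENNReal.ofReal (K * ∫ t in s i..s (i + 1), G.energyDensity t))
    (h := ENNReal.ofReal h) (M := ENNReal.ofReal (√K * G.seminorm0)) ENNReal.ofReal_ne_top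
    (fun i hi => ENNReal.ofReal_le_ofReal (hgap i (Finset.mem_range.1 hi)))
    (fun i hi x hx => ?_) ?_ hp
  · refine hLp.trans_eq ?_
    rw [ENNReal.ofReal_rpow_of_nonneg hh ENNReal.toReal_nonneg,
      ← ENNReal.ofReal_mul (by positivity)]
    ring_nf
  · rw [← ofReal_norm, ← ENNReal.ofReal_pow (norm_nonneg _)]
    exact ENNReal.ofReal_le_ofReal (hu i (Finset.mem_range.1 hi) x (Ioc_subset_Icc_self hx))
  · rw [← ENNReal.ofReal_sum_of_nonneg fun i hi =>
      mul_nonneg hK (hnonneg (Finset.mem_range.1 hi)),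
      ← ENNReal.ofReal_pow (mul_nonneg (Real.sqrt_nonneg _) G.seminorm0_nonneg)]
    exact ENNReal.ofReal_le_ofReal hsum

variable (hs0 : 0 < s 0) (hs : StrictMonoOn s (Iic N)) (hh : 0 ≤ h)
  (hgap : ∀ i < N, s (i + 1) - s i ≤ h) (hG : ∀ i ≤ N, G.f (s i) = 0) (hp : 2 ≤ p)
include hs0 hs hh hgap hG hp

theorem eLpNorm_f'_le :
    eLpNorm G.f' p (volume.restrict (Icc (s 0) (s N))) ≤
      ENNReal.ofReal (1 / √(s 0) * h ^ (1 / 2 + (1 / p).toReal) * G.seminorm0) := by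
  refine (eLpNorm_le_of_sq_le_energy (G := G) (K := h / s 0) hs0 hs.monotoneOn hh hgap
    (by positivity) (fun i hi x hx => ?_) hp).trans_eq ?_
  · have hlt : s i < s (i + 1) := hs hi.le hi i.lt_succ_self
    have hle : s 0 ≤ s i := hs.monotoneOn N.zero_le hi.le i.zero_le
    refine (norm_f'_sq_le hs0 hle hlt (hG i hi.le) (hG _ hi) hx).trans ?_
    gcongr
    exacts [G.integral_energyDensity_nonneg (hs0.trans_le hle) hlt.le, hgap i hi]
  · rw [Real.rpow_add_of_nonneg hh (by positivity) ENNReal.toReal_nonneg, Real.sqrt_div hh,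
      Real.sqrt_eq_rpow h]
    ring_nf

theorem eLpNorm_f_le :
    eLpNorm G.f p (volume.restrict (Icc (s 0) (s N))) ≤
      ENNReal.ofReal (1 / (2 * √(s 0)) * h ^ (3 / 2 + (1 / p).toReal) * G.seminorm0) := by
  refine (eLpNorm_le_of_sq_le_energy (G := G) (K := (h / 2) ^ 2 * (h / s 0)) hs0 hs.monotoneOn hh
    hgap (by positivity) (fun i hi x hx => ?_) hp).trans_eq ?_
  · have hlt : s i < s (i + 1) := hs hi.le hi i.lt_succ_self
    have hle : s 0 ≤ s i := hs.monotoneOn N.zero_le hi.le i.zero_le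
    have hgap0 : 0 ≤ s (i + 1) - s i := sub_nonneg.2 hlt.le
    refine (norm_f_sq_le hs0 hle hlt (hG i hi.le) (hG _ hi) hx).trans ?_
    rw [← mul_assoc]
    gcongr
    exacts [G.integral_energyDensity_nonneg (hs0.trans_le hle) hlt.le, hgap i hi, hgap i hi]
  · have hexp : (3 / 2 : ℝ) = 1 + 1 / 2 := by norm_num
    rw [hexp, Real.rpow_add_of_nonneg hh (by positivity) ENNReal.toReal_nonneg,
      Real.rpow_add_of_nonneg hh zero_le_one (by positivity), Real.rpow_one,
      Real.sqrt_mul (by positivity), Real.sqrt_sq (by positivity), Real.sqrt_div hh,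
      Real.sqrt_eq_rpow h]
    ring_nf

end KnotErrorBounds

section Orthogonality

theorem aestronglyMeasurable_f' : AEStronglyMeasurable G.f' (volume.restrict (Ioi 0)) :=
  G.contDeriv.aestronglyMeasurable measurableSet_Ioi

theorem aestronglyMeasurable_f'' : AEStronglyMeasurable G.f'' (volume.restrict (Ioi 0)) := by
  refine LocallyIntegrableOn.aestronglyMeasurable
    ((locallyIntegrableOn_iff isOpen_Ioi.isLocallyClosed).2 fun K hK hKc => ?_)
  obtain rfl | hne := K.eq_empty_or_nonempty
  · exact integrableOn_empty
  obtain ⟨m, hmK, hm⟩ := hKc.exists_isLeast hne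
  obtain ⟨M, hMK, hM⟩ := hKc.exists_isGreatest hne
  exact (G.locAC m M (hK hmK) (hm hMK)).1.mono_set fun x hx => ⟨hm hx, hM hx⟩

instance : Sub Lambda0 where
  sub F S :=
    { f := fun x => F.f x - S.f x
      f' := fun x => F.f' x - S.f' x
      f'' := fun x => F.f'' x - S.f'' x
      hasDeriv := fun x hx => (F.hasDeriv x hx).sub (S.hasDeriv x hx)
      contDeriv := F.contDeriv.sub S.contDeriv
      locAC := fun a b ha hab => by
        have hsub := (F.isPrimitiveOn_f' ha hab).sub (S.isPrimitiveOn_f' ha hab)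
        exact ⟨(intervalIntegrable_iff_integrableOn_Icc_of_le hab).1 hsub.intervalIntegrable,
          fun x hx => hsub.eq_add_integral x (uIcc_of_le hab ▸ hx)⟩
      energyFin := by
        refine ((F.integrableOn_energyDensity.add S.integrableOn_energyDensity).const_mul 2).mono'
          ?_ ?_
        · have hf' := (F.aestronglyMeasurable_f'.sub S.aestronglyMeasurable_f').norm.pow 2
          have hf'' := (F.aestronglyMeasurable_f''.sub S.aestronglyMeasurable_f'').norm.pow 2
          exact (aestronglyMeasurable_id.mul hf'').add
            ((measurable_id.const_div (1 : ℝ)).aestronglyMeasurable.mul hf')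
        · filter_upwards [ae_restrict_mem measurableSet_Ioi] with x (hx : 0 < x)
          have hparallelogram (u v : ℂ) : ‖u - v‖ ^ 2 ≤ 2 * (‖u‖ ^ 2 + ‖v‖ ^ 2) := by
            nlinarith [parallelogram_law_with_norm ℝ u v, sq_nonneg ‖u + v‖]
          rw [Real.norm_of_nonneg (by positivity)]
          calc x * ‖F.f'' x - S.f'' x‖ ^ 2 + 1 / x * ‖F.f' x - S.f' x‖ ^ 2
              ≤ x * (2 * (‖F.f'' x‖ ^ 2 + ‖S.f'' x‖ ^ 2)) +
                1 / x * (2 * (‖F.f' x‖ ^ 2 + ‖S.f' x‖ ^ 2)) := by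
                gcongr <;> exact hparallelogram _ _
            _ = 2 * (F.energyDensity x + S.energyDensity x) := by unfold energyDensity; ring }

theorem norm_innerDensity_le (hx : 0 < x) :
    ‖innerDensity F G x‖ ≤ F.energyDensity x + G.energyDensity x := by
  have hamgm (u v : ℂ) : ‖u‖ * ‖v‖ ≤ ‖u‖ ^ 2 + ‖v‖ ^ 2 := by
    nlinarith [two_mul_le_add_sq ‖u‖ ‖v‖, mul_nonneg (norm_nonneg u) (norm_nonneg v)]
  calc ‖innerDensity F G x‖
      ≤ x * (‖F.f'' x‖ * ‖G.f'' x‖) + 1 / x * (‖F.f' x‖ * ‖G.f' x‖) := by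
        refine (norm_add_le _ _).trans_eq ?_
        simp only [norm_mul, norm_div, norm_one, RCLike.norm_conj, Complex.norm_of_nonneg hx.le,
          mul_assoc]
    _ ≤ x * (‖F.f'' x‖ ^ 2 + ‖G.f'' x‖ ^ 2) + 1 / x * (‖F.f' x‖ ^ 2 + ‖G.f' x‖ ^ 2) := by
        gcongr <;> exact hamgm _ _
    _ = F.energyDensity x + G.energyDensity x := by unfold energyDensity; ring

theorem integrableOn_innerDensity : IntegrableOn (innerDensity F G) (Ioi 0) := by
  refine Integrable.mono' (F.integrableOn_energyDensity.add G.integrableOn_energyDensity) ?_ ?_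
  · have hconj {u : ℝ → ℂ} (hu : AEStronglyMeasurable u (volume.restrict (Ioi 0))) :
        AEStronglyMeasurable (fun x => starRingEnd ℂ (u x)) (volume.restrict (Ioi 0)) :=
      Complex.continuous_conj.comp_aestronglyMeasurable hu
    have hid : Measurable fun x : ℝ => (x : ℂ) := Complex.measurable_ofReal
    exact ((hid.aestronglyMeasurable.mul F.aestronglyMeasurable_f'').mul
      (hconj G.aestronglyMeasurable_f'')).add
      (((hid.const_div 1).aestronglyMeasurable.mul F.aestronglyMeasurable_f').mul
        (hconj G.aestronglyMeasurable_f'))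
  · filter_upwards [ae_restrict_mem measurableSet_Ioi] with x hx
    exact F.norm_innerDensity_le G hx

theorem energyDensity_eq_add_energyDensity_sub (x : ℝ) :
    F.energyDensity x =
      S.energyDensity x + (F - S).energyDensity x + 2 * (innerDensity (F - S) S x).re := by
  have hsq (u v : ℂ) :
      ‖u‖ ^ 2 = ‖v‖ ^ 2 + ‖u - v‖ ^ 2 + 2 * ((u - v) * starRingEnd ℂ v).re := by
    have hadd := Complex.normSq_add (u - v) v
    rw [sub_add_cancel] at hadd
    simp only [← Complex.normSq_eq_norm_sq, hadd]
    ring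
  have hre : (innerDensity (F - S) S x).re =
      x * ((F.f'' x - S.f'' x) * starRingEnd ℂ (S.f'' x)).re +
        1 / x * ((F.f' x - S.f' x) * starRingEnd ℂ (S.f' x)).re := by
    rw [← Complex.re_ofReal_mul, ← Complex.re_ofReal_mul, ← Complex.add_re, ← mul_assoc,
      ← mul_assoc, Complex.ofReal_div, Complex.ofReal_one]
    rfl
  rw [hre, energyDensity, hsq (F.f'' x) (S.f'' x), hsq (F.f' x) (S.f' x)]
  simp only [energyDensity, show (F - S).f' x = F.f' x - S.f' x from rfl,
    show (F - S).f'' x = F.f'' x - S.f'' x from rfl]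
  ring

variable {F S}

theorem seminorm0_sub_le_of_innerBL_eq_zero (horth : innerBL (F - S) S = 0) :
    (F - S).seminorm0 ≤ F.seminorm0 := by
  have hinner := (F - S).integrableOn_innerDensity S
  have hre : ∫ x in Ioi (0 : ℝ), (innerDensity (F - S) S x).re = 0 := by
    have hintegral := integral_re hinner
    rwa [show ∫ x in Ioi (0 : ℝ), innerDensity (F - S) S x = 0 from horth] at hintegral
  have hpythagoras : F.seminorm0 ^ 2 = S.seminorm0 ^ 2 + (F - S).seminorm0 ^ 2 := by
    have hcross : IntegrableOn (fun x => 2 * (innerDensity (F - S) S x).re) (Ioi 0) :=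
      hinner.re.const_mul 2
    have hsum : IntegrableOn (fun x => S.energyDensity x + (F - S).energyDensity x) (Ioi 0) :=
      S.integrableOn_energyDensity.add (F - S).integrableOn_energyDensity
    simp only [seminorm0_sq, F.energyDensity_eq_add_energyDensity_sub S]
    rw [integral_add hsum hcross,
      integral_add S.integrableOn_energyDensity (F - S).integrableOn_energyDensity,
      integral_const_mul, hre, mul_zero, add_zero]
  refine (sq_le_sq₀ (F - S).seminorm0_nonneg F.seminorm0_nonneg).1 ?_
  rw [hpythagoras]
  exact le_add_of_nonneg_left (sq_nonneg _)

end Orthogonality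

section KernelPieces

/-- The quantity `x S″(x)` conjugate to `S′` in the integration by parts of the energy. -/
def flux (S : Lambda0) (x : ℝ) : ℂ := x * deriv S.f' x

/-- The boundary term produced by integrating `innerDensity G S` by parts. -/
def boundaryTerm (G S : Lambda0) (x : ℝ) : ℂ := G.f' x * starRingEnd ℂ (S.flux x)

theorem continuousOn_flux (hS : ContDiffOn ℝ 2 S.f (Ioi 0)) : ContinuousOn S.flux (Ioi 0) := by
  have hderiv : EqOn S.f' (deriv S.f) (Ioi 0) := fun x hx => (S.hasDeriv x hx).deriv.symm
  rw [← one_add_one_eq_two, contDiffOn_succ_iff_deriv_of_isOpen isOpen_Ioi] at hS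
  have hf' : ContDiffOn ℝ (0 + 1) S.f' (Ioi 0) := by
    rw [zero_add]; exact hS.2.2.congr hderiv
  rw [contDiffOn_succ_iff_deriv_of_isOpen isOpen_Ioi] at hf'
  exact Complex.continuous_ofReal.continuousOn.mul hf'.2.2.continuousOn

variable {G S} {α β : ℝ} {a b c d : ℂ} {U : Set ℝ}

theorem tendsto_boundaryTerm_zero {l : Filter ℝ} (hl : ∀ᶠ x in l, 0 < x)
    (hS : Tendsto S.flux l (nhds 0)) : Tendsto (boundaryTerm G S) l (nhds 0) := by
  obtain ⟨C, hC⟩ := G.exists_norm_f'_le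
  have hbdd : IsBoundedUnder (· ≤ ·) l (norm ∘ G.f') :=
    isBoundedUnder_of_eventually_le (hl.mono hC)
  have hconj : Tendsto (fun x => starRingEnd ℂ (S.flux x)) l (nhds 0) :=
    (Complex.continuous_conj.tendsto' 0 0 (map_zero _)).comp hS
  exact isBoundedUnder_le_mul_tendsto_zero hbdd hconj

theorem eqOn_f'_kernelDeriv (hU : IsOpen U) (hU0 : U ⊆ Ioi 0)
    (hS : EqOn S.f (kernelFun a b c d) U) : EqOn S.f' (kernelDeriv a b d) U := fun x hx =>
  (S.hasDeriv x (hU0 hx)).unique ((hasDerivAt_kernelFun a b c d (hU0 hx)).congr_of_eventuallyEq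
    (hS.eventuallyEq_of_mem (hU.mem_nhds hx)))

theorem hasDerivAt_f'_of_eqOn_kernelFun (hU : IsOpen U) (hU0 : U ⊆ Ioi 0)
    (hS : EqOn S.f (kernelFun a b c d) U) (hx : x ∈ U) :
    HasDerivAt S.f' (kernelDeriv₂ a b d x) x :=
  (hasDerivAt_kernelDeriv a b d (hU0 hx)).congr_of_eventuallyEq
    ((eqOn_f'_kernelDeriv hU hU0 hS).eventuallyEq_of_mem (hU.mem_nhds hx))

theorem flux_eq_of_eqOn_kernelFun (hU : IsOpen U) (hU0 : U ⊆ Ioi 0)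
    (hS : EqOn S.f (kernelFun a b c d) U) (hx : x ∈ U) :
    S.flux x = x * kernelDeriv₂ a b d x := by
  rw [flux, (hasDerivAt_f'_of_eqOn_kernelFun hU hU0 hS hx).deriv]

theorem hasDerivAt_flux_of_eqOn_kernelFun (hU : IsOpen U) (hU0 : U ⊆ Ioi 0)
    (hS : EqOn S.f (kernelFun a b c d) U) (hx : x ∈ U) :
    HasDerivAt S.flux (S.f' x / x + 4 * b) x := by
  rw [eqOn_f'_kernelDeriv hU hU0 hS hx]
  refine (hasDerivAt_mul_kernelDeriv₂ a b d (hU0 hx)).congr_of_eventuallyEq ?_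
  filter_upwards [hU.mem_nhds hx] with y hy using flux_eq_of_eqOn_kernelFun hU hU0 hS hy

theorem isPrimitiveOn_flux_of_eqOn_kernelFun (hα : 0 < α) (hαβ : α ≤ β)
    (hS2 : ContDiffOn ℝ 2 S.f (Ioi 0)) (hS : EqOn S.f (kernelFun a b c d) (Ioo α β)) :
    IsPrimitiveOn S.flux (fun x => S.f' x / x + 4 * b) α β := by
  have hpos : Icc α β ⊆ Ioi 0 := fun x hx => hα.trans_le hx.1
  refine .of_hasDerivAt_Ioo hαβ ((S.continuousOn_flux hS2).mono hpos)
    (fun x hx => hasDerivAt_flux_of_eqOn_kernelFun isOpen_Ioo (Ioo_subset_Icc_self.trans hpos)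
      hS hx) (ContinuousOn.intervalIntegrable ?_)
  rw [uIcc_of_le hαβ]
  exact ((S.contDeriv.mono hpos).div Complex.continuous_ofReal.continuousOn fun x hx =>
    Complex.ofReal_ne_zero.2 (hpos hx).ne').add continuousOn_const

theorem integral_innerDensity_of_eqOn_kernelFun (hα : 0 < α) (hαβ : α ≤ β)
    (hS2 : ContDiffOn ℝ 2 S.f (Ioi 0)) (hS : EqOn S.f (kernelFun a b c d) (Ioo α β)) :
    ∫ x in α..β, innerDensity G S x =
      boundaryTerm G S β - boundaryTerm G S α - 4 * starRingEnd ℂ b * (G.f β - G.f α) := by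
  have hflux := isPrimitiveOn_flux_of_eqOn_kernelFun hα hαβ hS2 hS
  have hG := G.isPrimitiveOn_f hα hαβ
  have hJ := (G.isPrimitiveOn_f' hα hαβ).mul hαβ hflux.conj
  have hae : innerDensity G S =ᵐ[volume.restrict (uIoc α β)] fun x =>
      G.f'' x * starRingEnd ℂ (S.flux x) + G.f' x * starRingEnd ℂ (S.f' x / x + 4 * b) -
        4 * starRingEnd ℂ b * G.f' x := by
    rw [uIoc_of_le hαβ, ← restrict_Ioo_eq_restrict_Ioc]
    refine (ae_restrict_iff' measurableSet_Ioo).2 ?_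
    filter_upwards [(S.isPrimitiveOn_f' hα hαβ).ae_hasDerivAt] with x hx hxαβ
    rw [flux, (hx hxαβ).deriv, innerDensity]
    simp only [map_add, map_mul, map_div₀, Complex.conj_ofReal, Complex.conj_ofNat]
    ring
  rw [intervalIntegral.integral_congr_ae_restrict hae,
    intervalIntegral.integral_sub hJ.intervalIntegrable (hG.intervalIntegrable.const_mul _),
    intervalIntegral.integral_const_mul,
    ← hJ.sub_eq_integral left_mem_uIcc right_mem_uIcc,
    ← hG.sub_eq_integral left_mem_uIcc right_mem_uIcc]
  rfl

end KernelPieces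

section SplineOrthogonality

variable {G S} {s : ℕ → ℝ} {N : ℕ} {a b c d : ℂ} {t : ℝ}

theorem integral_innerDensity_knots (hs0 : 0 < s 0) (hs : MonotoneOn s (Iic N))
    (hS2 : ContDiffOn ℝ 2 S.f (Ioi 0)) (hG : ∀ i ≤ N, G.f (s i) = 0)
    (hS : ∀ i < N, ∃ a b c d, EqOn S.f (kernelFun a b c d) (Ioo (s i) (s (i + 1)))) :
    ∫ x in s 0..s N, innerDensity G S x = boundaryTerm G S (s N) - boundaryTerm G S (s 0) := by
  have hpos {i : ℕ} (hi : i ≤ N) : 0 < s i := hs0.trans_le (hs N.zero_le hi i.zero_le)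
  have hle {i : ℕ} (hi : i < N) : s i ≤ s (i + 1) := hs hi.le hi i.le_succ
  rw [← intervalIntegral.sum_integral_adjacent_intervals fun i hi =>
    (intervalIntegrable_iff_integrableOn_Ioc_of_le (hle hi)).2
      ((G.integrableOn_innerDensity S).mono_set fun x hx => (hpos hi.le).trans hx.1),
    ← Finset.sum_range_sub (fun i => boundaryTerm G S (s i))]
  refine Finset.sum_congr rfl fun i hi => ?_
  rw [Finset.mem_range] at hi
  obtain ⟨a, b, c, d, hS⟩ := hS i hi
  rw [integral_innerDensity_of_eqOn_kernelFun (hpos hi.le) (hle hi) hS2 hS, hG i hi.le,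
    hG (i + 1) hi, sub_zero, mul_zero, sub_zero]

theorem tendsto_flux_atTop_of_eqOn_kernelFun (ht : 0 ≤ t)
    (hS : EqOn S.f (kernelFun 0 0 c d) (Ioi t)) : Tendsto S.flux atTop (nhds 0) := by
  have hpos : Ioi t ⊆ Ioi 0 := Ioi_subset_Ioi ht
  have hinv : Tendsto (fun x : ℝ => ((x⁻¹ : ℝ) : ℂ)) atTop (nhds 0) :=
    (Complex.continuous_ofReal.tendsto' 0 0 Complex.ofReal_zero).comp tendsto_inv_atTop_zero
  have hlim := hinv.const_mul (-d)
  rw [mul_zero] at hlim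
  refine hlim.congr' ?_
  filter_upwards [Ioi_mem_atTop t] with x hx
  have hx0 : (x : ℂ) ≠ 0 := Complex.ofReal_ne_zero.2 (hpos hx).ne'
  rw [flux_eq_of_eqOn_kernelFun isOpen_Ioi hpos hS hx, kernelDeriv₂]
  push_cast
  field_simp
  ring

theorem tendsto_flux_nhdsGT_zero_of_eqOn_kernelFun (ht : 0 < t)
    (hS : EqOn S.f (kernelFun a b c 0) (Ioo 0 t)) :
    Tendsto S.flux (nhdsWithin 0 (Ioi 0)) (nhds 0) := by
  have hlim : Tendsto
      (fun x : ℝ => (2 * a + 3 * b) * (x : ℂ) + 2 * b * ((x * Real.log x : ℝ) : ℂ))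
      (nhdsWithin 0 (Ioi 0)) (nhds 0) := by
    have hcont : Continuous
        fun x : ℝ => (2 * a + 3 * b) * (x : ℂ) + 2 * b * ((x * Real.log x : ℝ) : ℂ) :=
      (continuous_const.mul Complex.continuous_ofReal).add
        (continuous_const.mul (Complex.continuous_ofReal.comp Real.continuous_mul_log))
    exact tendsto_nhdsWithin_of_tendsto_nhds (hcont.tendsto' _ _ (by simp))
  refine hlim.congr' ?_
  filter_upwards [Ioo_mem_nhdsGT ht] with x hx
  rw [flux_eq_of_eqOn_kernelFun isOpen_Ioo Ioo_subset_Ioi_self hS hx, kernelDeriv₂]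
  push_cast
  ring

theorem integral_Ioi_innerDensity (ht : 0 < t) (hS2 : ContDiffOn ℝ 2 S.f (Ioi 0))
    (hS : EqOn S.f (kernelFun 0 0 c d) (Ioi t)) :
    ∫ x in Ioi t, innerDensity G S x = -boundaryTerm G S t := by
  have hpos : Ioi t ⊆ Ioi 0 := Ioi_subset_Ioi ht.le
  refine tendsto_nhds_unique (intervalIntegral_tendsto_integral_Ioi t
    ((G.integrableOn_innerDensity S).mono_set hpos) tendsto_id) ?_
  have hJ := (tendsto_boundaryTerm_zero (G := G) (eventually_gt_atTop 0)
    (tendsto_flux_atTop_of_eqOn_kernelFun ht.le hS)).sub_const (boundaryTerm G S t)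
  rw [zero_sub] at hJ
  refine hJ.congr' ?_
  filter_upwards [Ici_mem_atTop t] with x hx
  rw [id, integral_innerDensity_of_eqOn_kernelFun ht hx hS2 (hS.mono Ioo_subset_Ioi_self),
    map_zero, mul_zero, zero_mul, sub_zero]

theorem integral_zero_innerDensity (ht : 0 < t) (hS2 : ContDiffOn ℝ 2 S.f (Ioi 0))
    (hS : EqOn S.f (kernelFun a b c 0) (Ioo 0 t)) (hGt : G.f t = 0)
    (hG0 : Tendsto (fun x => starRingEnd ℂ b * G.f x) (nhdsWithin 0 (Ioi 0)) (nhds 0)) :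
    ∫ x in (0 : ℝ)..t, innerDensity G S x = boundaryTerm G S t := by
  have hmem : Ioo 0 t ∈ nhdsWithin (0 : ℝ) (Ioi 0) := Ioo_mem_nhdsGT ht
  have hint : IntegrableOn (innerDensity G S) (uIcc 0 t) := by
    rw [uIcc_of_le ht.le, integrableOn_Icc_iff_integrableOn_Ioc]
    exact (G.integrableOn_innerDensity S).mono_set Ioc_subset_Ioi_self
  have hprim : Tendsto (fun ε => ∫ x in ε..t, innerDensity G S x) (nhdsWithin 0 (Ioi 0))
      (nhds (∫ x in (0 : ℝ)..t, innerDensity G S x)) := by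
    refine (intervalIntegral.continuousOn_primitive_interval_left hint 0
      left_mem_uIcc).mono_left (nhdsWithin_le_of_mem ?_)
    rw [uIcc_of_le ht.le]
    exact mem_of_superset hmem Ioo_subset_Icc_self
  refine tendsto_nhds_unique hprim ?_
  have hJ := ((tendsto_boundaryTerm_zero (G := G) self_mem_nhdsWithin
    (tendsto_flux_nhdsGT_zero_of_eqOn_kernelFun ht hS)).const_sub
    (boundaryTerm G S t)).add (hG0.const_mul 4)
  rw [sub_zero, mul_zero, add_zero] at hJ
  refine hJ.congr' ?_
  filter_upwards [hmem] with ε hε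
  rw [integral_innerDensity_of_eqOn_kernelFun hε.1 hε.2.le hS2
    (hS.mono (Ioo_subset_Ioo_left hε.1.le)), hGt]
  ring

theorem innerBL_eq_zero_of_kernelFun_pieces (hs0 : 0 < s 0) (hs : MonotoneOn s (Iic N))
    (hG : ∀ i ≤ N, G.f (s i) = 0) (hS2 : ContDiffOn ℝ 2 S.f (Ioi 0))
    (hleft : EqOn S.f (kernelFun a b c 0) (Ioo 0 (s 0)))
    (hG0 : Tendsto (fun x => starRingEnd ℂ b * G.f x) (nhdsWithin 0 (Ioi 0)) (nhds 0))
    (hpieces : ∀ i < N, ∃ a b c d, EqOn S.f (kernelFun a b c d) (Ioo (s i) (s (i + 1))))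
    (hright : ∃ c d, EqOn S.f (kernelFun 0 0 c d) (Ioi (s N))) : innerBL G S = 0 := by
  have hsN : s 0 ≤ s N := hs N.zero_le self_mem_Iic N.zero_le
  obtain ⟨c', d', hright⟩ := hright
  have hint := G.integrableOn_innerDensity S
  calc innerBL G S = ∫ x in Ioi (0 : ℝ), innerDensity G S x := rfl
    _ = (∫ x in (0 : ℝ)..s 0, innerDensity G S x) +
        ((∫ x in s 0..s N, innerDensity G S x) + ∫ x in Ioi (s N), innerDensity G S x) := by
      have hint_tail {t : ℝ} (ht : 0 ≤ t) := hint.mono_set (Ioi_subset_Ioi ht)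
      rw [intervalIntegral.integral_interval_add_Ioi (hint_tail hs0.le)
        (hint_tail (hs0.le.trans hsN)),
        intervalIntegral.integral_interval_add_Ioi hint (hint_tail hs0.le)]
    _ = 0 := by
      rw [integral_zero_innerDensity hs0 hS2 hleft (hG 0 N.zero_le) hG0,
        integral_innerDensity_knots hs0 hs hS2 hG hpieces,
        integral_Ioi_innerDensity (hs0.trans_le hsN) hS2 hright]
      ring

end SplineOrthogonality

section Splines

variable {F S} {n : ℕ} {r : ℕ → ℝ}

/- Interpolation at `0` makes `F - S` vanish there, and non-singularity makes `b` vanish; either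
way the contribution of `b` to the boundary terms at `0` disappears. -/
theorem exists_eqOn_kernelFun_left (hS : IsBLSpline n r S.f)
    (hAB : Tendsto F.f (nhdsWithin 0 (Ioi 0)) (nhds (S.f 0)) ∨ NonSingularBLS (r 1) S.f) :
    ∃ a b c, EqOn S.f (kernelFun a b c 0) (Ioo 0 (r 1)) ∧
      Tendsto (fun x => starRingEnd ℂ b * (F - S).f x) (nhdsWithin 0 (Ioi 0)) (nhds 0) := by
  obtain hF | ⟨a, c, hac⟩ := hAB
  · obtain ⟨a, b, c, habc⟩ := hS.left
    refine ⟨a, b, c, fun x hx => by rw [habc x hx, kernelFun]; ring, ?_⟩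
    have hS0 : Tendsto S.f (nhdsWithin 0 (Ioi 0)) (nhds (S.f 0)) :=
      hS.cont0.mono_left (nhdsWithin_mono 0 Ioi_subset_Ici_self)
    have hsub := (hF.sub hS0).const_mul (starRingEnd ℂ b)
    rwa [sub_self, mul_zero] at hsub
  · refine ⟨a, 0, c, fun x hx => by rw [hac x hx, kernelFun]; ring, ?_⟩
    simp only [map_zero, zero_mul, tendsto_const_nhds]

theorem seminorm0_sub_le_of_isBLSpline {N : ℕ} (hr0 : 0 < r 1)
    (hr : MonotoneOn (fun i => r (i + 1)) (Iic N)) (hS : IsBLSpline (N + 1) r S.f)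
    (hFS : ∀ i ≤ N, (F - S).f (r (i + 1)) = 0)
    (hAB : Tendsto F.f (nhdsWithin 0 (Ioi 0)) (nhds (S.f 0)) ∨ NonSingularBLS (r 1) S.f) :
    (F - S).seminorm0 ≤ F.seminorm0 := by
  obtain ⟨a, b, c, hleft, hzero⟩ := exists_eqOn_kernelFun_left hS hAB
  refine seminorm0_sub_le_of_innerBL_eq_zero
    (innerBL_eq_zero_of_kernelFun_pieces hr0 hr hFS hS.smooth hleft hzero
      (fun i hi => hS.pieces (i + 1) (by lia) (by lia)) ?_)
  obtain ⟨c, d, hright⟩ := hS.right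
  exact ⟨c, d, fun x hx => by rw [hright x hx, kernelFun]; ring⟩

end Splines

end Lambda0

/-- `L^p` error bound for `p ∈ [2,∞]`: for `l ∈ {0,1}`,
`‖f^{(l)} − σ^{(l)}‖_{L^p[r₁,r_n]} ≤ (1/(2^{1−l}·√r₁))·h^{3/2+1/p−l}·‖f‖₀`
(with the convention `1/∞ = 0`). -/
theorem stmt13 (n : ℕ) (hn : 2 ≤ n) (r : ℕ → ℝ) (hpos : 0 < r 1)
    (hmono : ∀ j, 1 ≤ j → j < n → r j < r (j + 1))
    (h : ℝ) (hh : IsGreatest {d : ℝ | ∃ j, 1 ≤ j ∧ j < n ∧ d = r (j + 1) - r j} h)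
    (F S : Lambda0) (hS : IsBLSpline n r S.f)
    (hint : ∀ j, 1 ≤ j → j ≤ n → S.f (r j) = F.f (r j))
    (hAB : Filter.Tendsto F.f (nhdsWithin 0 (Set.Ioi 0)) (nhds (S.f 0)) ∨
      NonSingularBLS (r 1) S.f)
    (p : ENNReal) (hp : 2 ≤ p) :
    MeasureTheory.eLpNorm (fun x => F.f x - S.f x) p
        (MeasureTheory.volume.restrict (Set.Icc (r 1) (r n))) ≤
      ENNReal.ofReal
        (1 / (2 * Real.sqrt (r 1)) * h ^ ((3:ℝ)/2 + (1/p).toReal) * F.seminorm0) ∧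
    MeasureTheory.eLpNorm (fun x => F.f' x - S.f' x) p
        (MeasureTheory.volume.restrict (Set.Icc (r 1) (r n))) ≤
      ENNReal.ofReal
        (1 / Real.sqrt (r 1) * h ^ ((1:ℝ)/2 + (1/p).toReal) * F.seminorm0) := by
  obtain ⟨N, rfl⟩ := Nat.exists_eq_add_of_le' (one_le_two.trans hn)
  have hs : StrictMonoOn (fun i => r (i + 1)) (Iic N) :=
    strictMonoOn_Iic_of_lt_succ fun i hi => hmono (i + 1) (by lia) (by lia)
  have hgap : ∀ i < N, r (i + 1 + 1) - r (i + 1) ≤ h := fun i hi =>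
    hh.2 ⟨i + 1, by lia, by lia, rfl⟩
  have hh0 : 0 ≤ h := by
    obtain ⟨j, hj, hjn, rfl⟩ := hh.1
    exact sub_nonneg.2 (hmono j hj hjn).le
  have hFS : ∀ i ≤ N, (F - S).f (r (i + 1)) = 0 := fun i hi =>
    sub_eq_zero.2 (hint (i + 1) (by lia) (by lia)).symm
  have henergy := Lambda0.seminorm0_sub_le_of_isBLSpline hpos hs.monotoneOn hS hFS hAB
  constructor
  · refine (Lambda0.eLpNorm_f_le hpos hs hh0 hgap hFS hp).trans (ENNReal.ofReal_le_ofReal ?_)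
    gcongr
  · refine (Lambda0.eLpNorm_f'_le hpos hs hh0 hgap hFS hp).trans (ENNReal.ofReal_le_ofReal ?_)
    gcongr
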